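/- arXiv:2105.15069 — 2 statements merged into one kernel-verified Lean document; each statement's English description precedes it below -/
import Mathlib

section
/- If L is symmetric (L y y' = L y' y for all y, y'), then for every v : Y → ℝ the Fenchel conjugate of the negative Max-Margin Bayes risk satisfies F_M(v) = sup_{q ∈ Δ} (⟨v, q⟩ + H_M(q)) = max_{y, y' ∈ Y} ( L y y' + (v y + v y') / 2 ). -/
open Finset Set

variable {Y : Type*} [Fintype Y] [DecidableEq Y] [Nonempty Y]

/-- Probability simplex over `Y`. -/
def simplexSet (Y : Type*) [Fintype Y] : Set (Y → ℝ) :=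
  {q | (∀ y, 0 ≤ q y) ∧ ∑ y, q y = 1}

/-- Bayes risk of the discrete loss `L`. -/
noncomputable def HL (L : Y → Y → ℝ) (q : Y → ℝ) : ℝ :=
  ⨅ y : Y, ∑ y', L y y' * q y'

/-- Optimal-label set. -/
noncomputable def ystar (L : Y → Y → ℝ) (q : Y → ℝ) : Set Y :=
  {y | ∑ y', L y y' * q y' = HL L q}

/-- Prediction set of label `y`. -/
noncomputable def predSet (L : Y → Y → ℝ) (y : Y) : Set (Y → ℝ) :=
  {q ∈ simplexSet Y | y ∈ ystar L q}

/-- Max-Margin loss. -/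
noncomputable def SM (L : Y → Y → ℝ) (v : Y → ℝ) (y : Y) : ℝ :=
  ⨆ y' : Y, (L y y' + v y' - v y)

/-- Bayes risk of the Max-Margin loss. -/
noncomputable def HM (L : Y → Y → ℝ) (q : Y → ℝ) : ℝ :=
  ⨅ v : Y → ℝ, ∑ y, q y * SM L v y

/-- Conditional-risk minimizers of the Max-Margin loss. -/
noncomputable def vstarM (L : Y → Y → ℝ) (q : Y → ℝ) : Set (Y → ℝ) :=
  {v | ∑ y, q y * SM L v y = HM L q}

/-- Restricted-Max-Margin loss. -/
noncomputable def SRM (L : Y → Y → ℝ) (v : Y → ℝ) (y : Y) : ℝ :=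
  sSup ((fun q => ∑ y', L y y' * q y' + ∑ z, v z * q z) '' predSet L y) - v y

/-- Bayes risk of the Restricted-Max-Margin loss. -/
noncomputable def HRM (L : Y → Y → ℝ) (q : Y → ℝ) : ℝ :=
  ⨅ v : Y → ℝ, ∑ y, q y * SRM L v y

/-- Conditional-risk minimizers of the Restricted-Max-Margin loss. -/
noncomputable def vstarRM (L : Y → Y → ℝ) (q : Y → ℝ) : Set (Y → ℝ) :=
  {v | ∑ y, q y * SRM L v y = HRM L q}

/-- Max-Min-Margin loss. -/
noncomputable def SMM (L : Y → Y → ℝ) (v : Y → ℝ) (y : Y) : ℝ :=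
  sSup ((fun q => (⨅ z : Y, ∑ y', L z y' * q y') + ∑ z, v z * q z) '' simplexSet Y) - v y

/-- Bayes risk of the Max-Min-Margin loss. -/
noncomputable def HMM (L : Y → Y → ℝ) (q : Y → ℝ) : ℝ :=
  ⨅ v : Y → ℝ, ∑ y, q y * SMM L v y

/-- Transportation polytope `U(q, q)`. -/
def Upoly (q : Y → ℝ) : Set (Y → Y → ℝ) :=
  {Q | (∀ y y', 0 ≤ Q y y') ∧ (∀ y, ∑ y', Q y y' = q y) ∧ (∀ y', ∑ y, Q y y' = q y')}

/-- The constraint set `C_L`. -/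
def CL (L : Y → Y → ℝ) : Set (Y → Y → ℝ) :=
  {Q | ∀ y z : Y, ∑ y', L y y' * Q y y' ≤ ∑ y', L z y' * Q y y'}

lemma le_SM (L : Y → Y → ℝ) (v : Y → ℝ) (y y' : Y) : L y y' + v y' - v y ≤ SM L v y :=
  le_ciSup (f := fun y' => L y y' + v y' - v y) (Set.finite_range _).bddAbove y'

lemma SM_nonneg {L : Y → Y → ℝ} (hnonneg : ∀ y y', 0 ≤ L y y') (v : Y → ℝ) (y : Y) :
    0 ≤ SM L v y := by
  linarith [le_SM L v y y, hnonneg y y]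

lemma HM_le {L : Y → Y → ℝ} (hnonneg : ∀ y y', 0 ≤ L y y') {q : Y → ℝ} (hq : ∀ y, 0 ≤ q y)
    (v : Y → ℝ) : HM L q ≤ ∑ y, q y * SM L v y := by
  refine ciInf_le (f := fun v => ∑ y, q y * SM L v y) ⟨0, ?_⟩ v
  rintro _ ⟨u, rfl⟩
  exact Finset.sum_nonneg fun y _ => mul_nonneg (hq y) (SM_nonneg hnonneg u y)

/-- Testing the Bayes risk at the score `v / 2` bounds the conjugate objective. -/
lemma dot_add_HM_le {L : Y → Y → ℝ} (hnonneg : ∀ y y', 0 ≤ L y y') (v : Y → ℝ) {q : Y → ℝ}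
    (hq : q ∈ simplexSet Y) :
    (∑ z, v z * q z) + HM L q ≤ ⨆ p : Y × Y, (L p.1 p.2 + (v p.1 + v p.2) / 2) := by
  set M := ⨆ p : Y × Y, (L p.1 p.2 + (v p.1 + v p.2) / 2)
  have hM : ∀ y, v y + SM L (fun z => v z / 2) y ≤ M := fun y => by
    have : SM L (fun z => v z / 2) y ≤ M - v y := ciSup_le fun y' => by
      have := le_ciSup (f := fun p : Y × Y => L p.1 p.2 + (v p.1 + v p.2) / 2)
        (Set.finite_range _).bddAbove (y, y')
      dsimp only at this
      linarith
    linarith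
  calc (∑ z, v z * q z) + HM L q
      ≤ (∑ z, v z * q z) + ∑ y, q y * SM L (fun z => v z / 2) y := by
        gcongr
        exact HM_le hnonneg hq.1 _
    _ = ∑ y, q y * (v y + SM L (fun z => v z / 2) y) := by
        rw [← Finset.sum_add_distrib]
        exact Finset.sum_congr rfl fun y _ => by ring
    _ ≤ ∑ y, q y * M := Finset.sum_le_sum fun y _ => mul_le_mul_of_nonneg_left (hM y) (hq.1 y)
    _ = M := by rw [← Finset.sum_mul, hq.2, one_mul]

/-- The uniform average of the point masses at `a` and `b`. -/
noncomputable def midpointMass (a b : Y) (y : Y) : ℝ :=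
  (if y = a then 1 / 2 else 0) + (if y = b then 1 / 2 else 0)

lemma sum_midpointMass_mul (a b : Y) (f : Y → ℝ) :
    ∑ y, midpointMass a b y * f y = (f a + f b) / 2 := by
  simp only [midpointMass, add_mul, ite_mul, zero_mul, Finset.sum_add_distrib,
    Finset.sum_ite_eq', Finset.mem_univ, if_true]
  ring

lemma midpointMass_mem_simplexSet (a b : Y) : midpointMass a b ∈ simplexSet Y := by
  refine ⟨fun y => ?_, ?_⟩
  · unfold midpointMass
    positivity
  · simpa using sum_midpointMass_mul a b fun _ => 1

lemma le_HM_midpointMass {L : Y → Y → ℝ} (hsymm : ∀ y y', L y y' = L y' y) (a b : Y) :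
    L a b ≤ HM L (midpointMass a b) := by
  refine le_ciInf fun u => ?_
  rw [sum_midpointMass_mul]
  linarith [le_SM L u a b, le_SM L u b a, hsymm a b]

theorem stmt15 (Y : Type*) [Fintype Y] [DecidableEq Y] [Nonempty Y] (L : Y → Y → ℝ)
    (hcard : 2 ≤ Fintype.card Y)
    (hnonneg : ∀ y y', 0 ≤ L y y')
    (hzero : ∀ y y', L y y' = 0 ↔ y = y')
    (hsymm : ∀ y y', L y y' = L y' y)
    (v : Y → ℝ) :
    sSup ((fun q => (∑ z, v z * q z) + HM L q) '' simplexSet Y) =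
    ⨆ p : Y × Y, (L p.1 p.2 + (v p.1 + v p.2) / 2) := by
  have hbound : ∀ x ∈ (fun q => (∑ z, v z * q z) + HM L q) '' simplexSet Y,
      x ≤ ⨆ p : Y × Y, (L p.1 p.2 + (v p.1 + v p.2) / 2) := by
    rintro _ ⟨q, hq, rfl⟩
    exact dot_add_HM_le hnonneg v hq
  have y₀ : Y := Classical.arbitrary Y
  refine le_antisymm (csSup_le ⟨_, _, midpointMass_mem_simplexSet y₀ y₀, rfl⟩ hbound)
    (ciSup_le fun p => ?_)
  refine le_csSup_of_le ⟨_, hbound⟩ ⟨_, midpointMass_mem_simplexSet p.1 p.2, rfl⟩ ?_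
  simp only [mul_comm (v _), sum_midpointMass_mul]
  linarith [le_HM_midpointMass hsymm p.1 p.2]
end

section
/- Suppose that for every y ∈ Y and every extreme point q of the prediction set Δ(y), the rank-one matrix q q^T (the matrix (y', y'') ↦ q y' · q y'') belongs to C_L. Then H_RM(q) = H_L(q) for all q ∈ Δ. -/
open Finset Set

variable {Y : Type*} [Fintype Y] [DecidableEq Y] [Nonempty Y]

theorem mem_ystar_iff {Y : Type*} [Fintype Y] [Nonempty Y] (L : Y → Y → ℝ) (q : Y → ℝ) (y : Y) :
    y ∈ ystar L q ↔ ∀ z, ∑ y', L y y' * q y' ≤ ∑ y', L z y' * q y' := by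
  have hbdd : BddBelow (Set.range fun z : Y => ∑ y', L z y' * q y') := (Set.finite_range _).bddBelow
  constructor
  · intro h z
    exact (show _ = HL L q from h).trans_le (ciInf_le hbdd z)
  · intro h
    exact le_antisymm (le_ciInf h) (ciInf_le hbdd y)

theorem exists_mem_ystar {Y : Type*} [Fintype Y] [Nonempty Y] (L : Y → Y → ℝ) (q : Y → ℝ) :
    ∃ y, y ∈ ystar L q :=
  exists_eq_ciInf_of_finite (f := fun z : Y => ∑ y', L z y' * q y')

theorem simplexSet_eq_stdSimplex (Y : Type*) [Fintype Y] : simplexSet Y = stdSimplex ℝ Y := rfl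

theorem predSet_eq {Y : Type*} [Fintype Y] [Nonempty Y] (L : Y → Y → ℝ) (y : Y) :
    predSet L y = stdSimplex ℝ Y ∩
      ⋂ z, {q | ∑ y', L y y' * q y' ≤ ∑ y', L z y' * q y'} := by
  ext q
  simp only [predSet, mem_ystar_iff, simplexSet_eq_stdSimplex, Set.mem_inter_iff, Set.mem_iInter,
    Set.mem_ofPred_eq]

theorem isCompact_predSet {Y : Type*} [Fintype Y] [Nonempty Y] (L : Y → Y → ℝ) (y : Y) :
    IsCompact (predSet L y) := by
  rw [predSet_eq]
  refine (isCompact_stdSimplex ℝ Y).inter_right (isClosed_iInter fun z => ?_)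
  exact isClosed_le (by fun_prop) (by fun_prop)

theorem isLinearMap_sum_mul {Y : Type*} [Fintype Y] (c : Y → ℝ) :
    IsLinearMap ℝ fun q : Y → ℝ => ∑ y, c y * q y :=
  (dotProductBilin ℝ ℝ c).isLinear

theorem isLinearMap_sum_mul_sub {Y : Type*} [Fintype Y] (c d : Y → ℝ) :
    IsLinearMap ℝ fun q : Y → ℝ => ∑ y, c y * q y - ∑ y, d y * q y :=
  ((isLinearMap_sum_mul c).mk' _ - (isLinearMap_sum_mul d).mk' _).isLinear

theorem convex_setOf_sum_mul_le {Y : Type*} [Fintype Y] (c d : Y → ℝ) :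
    Convex ℝ {q : Y → ℝ | ∑ y, c y * q y ≤ ∑ y, d y * q y} := by
  simpa only [sub_nonpos] using convex_halfSpace_le (isLinearMap_sum_mul_sub c d) 0

theorem convex_predSet {Y : Type*} [Fintype Y] [Nonempty Y] (L : Y → Y → ℝ) (y : Y) :
    Convex ℝ (predSet L y) := by
  rw [predSet_eq]
  exact (convex_stdSimplex ℝ Y).inter (convex_iInter fun z => convex_setOf_sum_mul_le _ _)

/-- Each admissible `p` bounds the Restricted-Max-Margin loss from below. -/
theorem le_SRM {Y : Type*} [Fintype Y] [Nonempty Y] (L : Y → Y → ℝ) (v : Y → ℝ) {y : Y}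
    {p : Y → ℝ} (hp : p ∈ predSet L y) :
    ∑ y', L y y' * p y' + ∑ z, v z * p z - v y ≤ SRM L v y := by
  have hbdd : BddAbove
      ((fun q => ∑ y', L y y' * q y' + ∑ z, v z * q z) '' predSet L y) :=
    (isCompact_predSet L y).bddAbove_image (by fun_prop)
  exact sub_le_sub_right (le_csSup hbdd (Set.mem_image_of_mem _ hp)) _

/-- If `q` lies in the prediction set of every label it charges, the conditional
Restricted-Max-Margin risk at `q` is at least the Bayes risk. -/
theorem HL_le_sum_mul_SRM_of_forall_mem {Y : Type*} [Fintype Y] [Nonempty Y] (L : Y → Y → ℝ)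
    (v : Y → ℝ) {q : Y → ℝ} (hq : q ∈ simplexSet Y) (h : ∀ y, 0 < q y → y ∈ ystar L q) :
    HL L q ≤ ∑ y, q y * SRM L v y := by
  calc HL L q = ∑ y, q y * (HL L q + ∑ z, v z * q z - v y) := by
        simp only [mul_sub, Finset.sum_sub_distrib, ← Finset.sum_mul, hq.2, mul_comm (v _)]
        ring
    _ ≤ ∑ y, q y * SRM L v y := by
        refine Finset.sum_le_sum fun y _ => ?_
        rcases (hq.1 y).eq_or_lt with h0 | hpos
        · simp [← h0]
        · have hy := h y hpos
          refine mul_le_mul_of_nonneg_left ?_ hpos.le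
          rw [← show ∑ y', L y y' * q y' = HL L q from hy]
          exact le_SRM L v ⟨hq, hy⟩

theorem mem_ystar_of_mem_CL {Y : Type*} [Fintype Y] [Nonempty Y] {L : Y → Y → ℝ} {q : Y → ℝ}
    (h : (fun a b => q a * q b) ∈ CL L) {y : Y} (hy : 0 < q y) : y ∈ ystar L q := by
  rw [mem_ystar_iff]
  intro z
  refine le_of_mul_le_mul_left ?_ hy
  simpa only [Finset.mul_sum, mul_left_comm] using h y z

theorem HL_le_sum_mul_SRM {Y : Type*} [Fintype Y] [Nonempty Y] (L : Y → Y → ℝ)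
    (hext : ∀ y : Y, ∀ q ∈ Set.extremePoints ℝ (predSet L y), (fun a b => q a * q b) ∈ CL L)
    {q : Y → ℝ} (hq : q ∈ simplexSet Y) (v : Y → ℝ) :
    HL L q ≤ ∑ y, q y * SRM L v y := by
  obtain ⟨y₀, hy₀⟩ := exists_mem_ystar L q
  have hsub : predSet L y₀ ⊆
      {p | ∑ y, L y₀ y * p y ≤ ∑ y, SRM L v y * p y} := by
    rw [← closure_convexHull_extremePoints (isCompact_predSet L y₀) (convex_predSet L y₀)]
    refine closure_minimal (convexHull_min (fun p hp => ?_) (convex_setOf_sum_mul_le _ _))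
      (isClosed_le (by fun_prop) (by fun_prop))
    have hmem : p ∈ predSet L y₀ := hp.1
    have hle := HL_le_sum_mul_SRM_of_forall_mem L v hmem.1
      fun y hy => mem_ystar_of_mem_CL (hext y₀ p hp) hy
    rw [← show ∑ y, L y₀ y * p y = HL L p from hmem.2] at hle
    simpa only [Set.mem_ofPred_eq, mul_comm (SRM L v _)] using hle
  have hle : ∑ y, L y₀ y * q y ≤ ∑ y, SRM L v y * q y := hsub ⟨hq, hy₀⟩
  rw [← show ∑ y, L y₀ y * q y = HL L q from hy₀]
  simpa only [mul_comm (SRM L v _)] using hle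

/-- The score `-L z` makes the Restricted-Max-Margin loss at most `L z`. -/
theorem SRM_neg_le {Y : Type*} [Fintype Y] [Nonempty Y] (L : Y → Y → ℝ) (z y : Y) :
    SRM L (fun y' => -L z y') y ≤ L z y := by
  have hsup : sSup ((fun q => ∑ y', L y y' * q y' + ∑ y', -L z y' * q y') '' predSet L y) ≤ 0 := by
    refine Real.sSup_nonpos ?_
    rintro _ ⟨p, hp, rfl⟩
    have hle := (mem_ystar_iff L p y).1 hp.2 z
    simp only [neg_mul, Finset.sum_neg_distrib]
    linarith
  unfold SRM
  linarith

theorem stmt18 (Y : Type*) [Fintype Y] [DecidableEq Y] [Nonempty Y] (L : Y → Y → ℝ)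
    (hcard : 2 ≤ Fintype.card Y)
    (hnonneg : ∀ y y', 0 ≤ L y y')
    (hzero : ∀ y y', L y y' = 0 ↔ y = y')
    (hext : ∀ y : Y, ∀ q ∈ Set.extremePoints ℝ (predSet L y),
      (fun a b => q a * q b) ∈ CL L) :
    ∀ q ∈ simplexSet Y, HRM L q = HL L q := by
  intro q hq
  have hlow := HL_le_sum_mul_SRM L hext hq
  refine le_antisymm ?_ (le_ciInf hlow)
  obtain ⟨z, hz⟩ := exists_mem_ystar L q
  calc HRM L q ≤ ∑ y, q y * SRM L (fun y' => -L z y') y :=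
        ciInf_le ⟨HL L q, Set.forall_mem_range.2 hlow⟩ _
    _ ≤ ∑ y, q y * L z y :=
        Finset.sum_le_sum fun y _ => mul_le_mul_of_nonneg_left (SRM_neg_le L z y) (hq.1 y)
    _ = HL L q := by
        rw [← show ∑ y, L z y * q y = HL L q from hz]
        simp only [mul_comm]
end
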